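/- arXiv:2602.05996 — 2 statements merged into one kernel-verified Lean document; each statement's English description precedes it below -/
import Mathlib

section
/- Let N, d, L be positive integers. Let A_1, …, A_L ∈ ℝ^{N×N} satisfy A_lᵀA_l = I_N and let W_1, …, W_L ∈ ℝ^{d×d} satisfy W_lW_lᵀ = I_d. Given X_0 ∈ ℝ^{N×d}, define X_l = A_l X_{l−1} W_l for l = 1, …, L, and set A = A_L ⋯ A_1. Then the kernel matrix Σ_L = X_L X_Lᵀ satisfies Σ_L = A Σ_0 Aᵀ where Σ_0 = X_0 X_0ᵀ; consequently rank(Σ_L) = rank(Σ_0) and the characteristic polynomials of Σ_L and Σ_0 coincide (so Σ_L and Σ_0 have the same eigenvalues). -/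
open Matrix

/-! Each layer sends the kernel `Σ` to `A l * Σ * (A l)ᵀ`, because the factor `W l * (W l)ᵀ = 1`
cancels in the middle. Over all the layers this conjugates the initial kernel by a product of
orthogonal matrices, hence by an orthogonal matrix, and conjugation preserves rank and
characteristic polynomial. -/

/-- The product `f k * f (k - 1) * ⋯ * f 1`, taken in decreasing order of the index: for the
attention matrices of a network, this is the accumulated attention of its first `k` layers. -/
def descProd {M : Type*} [Monoid M] (f : ℕ → M) (k : ℕ) : M :=
  ((List.range k).map fun i => f (k - i)).prod

section DescProd

variable {M : Type*} [Monoid M] (f : ℕ → M)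

theorem descProd_zero : descProd f 0 = 1 :=
  rfl

theorem descProd_succ (k : ℕ) : descProd f (k + 1) = f (k + 1) * descProd f k := by
  simp only [descProd, List.prod_range_succ', Nat.sub_zero, Nat.succ_eq_add_one,
    Nat.add_sub_add_right]

variable {f} in
theorem descProd_mem (S : Submonoid M) {k : ℕ} (hf : ∀ l, 1 ≤ l → l ≤ k → f l ∈ S) :
    descProd f k ∈ S := by
  refine S.list_prod_mem (List.forall_mem_map.mpr fun i hi => ?_)
  have hik : i < k := List.mem_range.mp hi
  exact hf (k - i) (by lia) (by lia)

end DescProd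

section Conjugation

variable {n R : Type*} [Fintype n] [DecidableEq n] [CommRing R] {P Q : Matrix n n R}

theorem rank_conj_of_mul_eq_one (h : Q * P = 1) (M : Matrix n n R) :
    (P * M * Q).rank = M.rank := by
  rw [rank_mul_eq_left_of_isUnit_det _ _ (isUnit_det_of_right_inverse h),
    rank_mul_eq_right_of_isUnit_det _ _ (isUnit_det_of_left_inverse h)]

theorem charpoly_conj_of_mul_eq_one (h : Q * P = 1) (M : Matrix n n R) :
    (P * M * Q).charpoly = M.charpoly := by
  rw [charpoly_mul_comm, ← Matrix.mul_assoc, h, Matrix.one_mul]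

end Conjugation

section Kernel

variable {m n R : Type*} [Fintype m] [Fintype n] [DecidableEq n] [CommSemiring R]

theorem mul_mul_mul_transpose_self {l o : Type*} [Fintype o] (A : Matrix l m R) (X : Matrix m n R)
    {W : Matrix n o R} (hW : W * Wᵀ = 1) :
    A * X * W * (A * X * W)ᵀ = A * (X * Xᵀ) * Aᵀ :=
  calc A * X * W * (A * X * W)ᵀ
      = A * X * (W * Wᵀ) * (Xᵀ * Aᵀ) := by simp only [transpose_mul, Matrix.mul_assoc]
    _ = A * (X * Xᵀ) * Aᵀ := by simp only [hW, Matrix.mul_one, Matrix.mul_assoc]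

variable [DecidableEq m]

theorem kernel_eq_descProd_conj {A : ℕ → Matrix m m R} {W : ℕ → Matrix n n R}
    {X : ℕ → Matrix m n R} {L : ℕ} (hW : ∀ l, 1 ≤ l → l ≤ L → W l * (W l)ᵀ = 1)
    (hX : ∀ l, 1 ≤ l → l ≤ L → X l = A l * X (l - 1) * W l) :
    X L * (X L)ᵀ = descProd A L * (X 0 * (X 0)ᵀ) * (descProd A L)ᵀ := by
  induction L with
  | zero => simp only [descProd_zero, transpose_one, Matrix.one_mul, Matrix.mul_one]
  | succ k ih =>
    have hkernel : X k * (X k)ᵀ = descProd A k * (X 0 * (X 0)ᵀ) * (descProd A k)ᵀ :=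
      ih (fun l h₁ h₂ => hW l h₁ (by lia)) (fun l h₁ h₂ => hX l h₁ (by lia))
    have hlayer : X (k + 1) = A (k + 1) * X k * W (k + 1) := hX (k + 1) (by lia) le_rfl
    calc X (k + 1) * (X (k + 1))ᵀ
        = A (k + 1) * (X k * (X k)ᵀ) * (A (k + 1))ᵀ := by
          rw [hlayer, mul_mul_mul_transpose_self _ _ (hW (k + 1) (by lia) le_rfl)]
      _ = descProd A (k + 1) * (X 0 * (X 0)ᵀ) * (descProd A (k + 1))ᵀ := by
          simp only [hkernel, descProd_succ, transpose_mul, Matrix.mul_assoc]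

end Kernel

theorem osa_kernel_preservation_general {m n R : Type*} [Fintype m] [DecidableEq m] [Fintype n]
    [DecidableEq n] [CommRing R] {L : ℕ} {A : ℕ → Matrix m m R} {W : ℕ → Matrix n n R}
    {X : ℕ → Matrix m n R} (hA : ∀ l, 1 ≤ l → l ≤ L → (A l)ᵀ * A l = 1)
    (hW : ∀ l, 1 ≤ l → l ≤ L → W l * (W l)ᵀ = 1)
    (hX : ∀ l, 1 ≤ l → l ≤ L → X l = A l * X (l - 1) * W l) :
    X L * (X L)ᵀ = descProd A L * (X 0 * (X 0)ᵀ) * (descProd A L)ᵀ ∧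
    (X L * (X L)ᵀ).rank = (X 0 * (X 0)ᵀ).rank ∧
    (X L * (X L)ᵀ).charpoly = (X 0 * (X 0)ᵀ).charpoly := by
  have hkernel := kernel_eq_descProd_conj hW hX
  have horth : (descProd A L)ᵀ * descProd A L = 1 :=
    (mem_orthogonalGroup_iff' m R).mp <|
      descProd_mem _ fun l h₁ h₂ => (mem_orthogonalGroup_iff' m R).mpr (hA l h₁ h₂)
  refine ⟨hkernel, ?_, ?_⟩
  · rw [hkernel, rank_conj_of_mul_eq_one horth]
  · rw [hkernel, charpoly_conj_of_mul_eq_one horth]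

/-- **Kernel preservation in a skipless OSA-only Transformer** (Theorem 2).
If each attention matrix `A l` is orthogonal and each value-output weight `W l` satisfies
`W l * (W l)ᵀ = 1`, and `X l = A l * X (l-1) * W l`, then with `Aprod = A L * ⋯ * A 1`
the kernel matrix satisfies `Σ_L = Aprod Σ_0 Aprodᵀ`; consequently the rank and the
characteristic polynomial (hence the eigenvalues) of the kernel matrix are preserved. -/
theorem osa_kernel_preservation
    (N d L : ℕ) (hN : 0 < N) (hd : 0 < d) (hL : 0 < L)
    (A : ℕ → Matrix (Fin N) (Fin N) ℝ) (W : ℕ → Matrix (Fin d) (Fin d) ℝ)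
    (hA : ∀ l, 1 ≤ l → l ≤ L → (A l)ᵀ * A l = 1)
    (hW : ∀ l, 1 ≤ l → l ≤ L → W l * (W l)ᵀ = 1)
    (X : ℕ → Matrix (Fin N) (Fin d) ℝ)
    (hX : ∀ l, 1 ≤ l → l ≤ L → X l = A l * X (l - 1) * W l)
    (Aprod : Matrix (Fin N) (Fin N) ℝ)
    (hAprod : Aprod = ((List.range L).map (fun i => A (L - i))).prod) :
    X L * (X L)ᵀ = Aprod * (X 0 * (X 0)ᵀ) * Aprodᵀ ∧
    (X L * (X L)ᵀ).rank = (X 0 * (X 0)ᵀ).rank ∧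
    (X L * (X L)ᵀ).charpoly = (X 0 * (X 0)ᵀ).charpoly := by
  subst hAprod
  exact osa_kernel_preservation_general hA hW hX
end

section
/- Fix x₀ ∈ (0, √3) and define the sequence x_{k+1} = x_k(3 − x_k²)/2. Then x_k → 1 as k → ∞. -/
/-!
Write `f y = y (3 - y²) / 2`. The identity `1 - f y = (1 - y)² (y + 2) / 2` shows that one step
sends `(0, √3)` into `(0, 1]`. On `(0, 1)` we have `f y - y = y (1 - y) (1 + y) / 2 > 0`, so from
then on the iterates increase and stay below `1`. Their limit is a positive fixed point of `f`,
hence equal to `1`.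
-/

open Filter Function Set Topology

section MonotoneIteration

variable {α : Type*} [ConditionallyCompleteLinearOrder α] [TopologicalSpace α] [OrderTopology α]

theorem tendsto_iterate_of_forall_mem_Ioc {f : α → α} {a b : α} (hab : a ≤ b)
    (hf : ContinuousOn f (Icc a b)) (hb : IsFixedPt f b) (hstep : ∀ y ∈ Ico a b, f y ∈ Ioc y b) :
    Tendsto (fun n => f^[n] a) atTop (𝓝 b) := by
  have hstep' : ∀ y ∈ Icc a b, f y ∈ Icc y b := by
    intro y hy
    rcases hy.2.eq_or_lt with rfl | hyb
    · exact ⟨hb.ge, hb.le⟩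
    · exact Ioc_subset_Icc_self (hstep y ⟨hy.1, hyb⟩)
  have hmaps : MapsTo f (Icc a b) (Icc a b) := fun y hy =>
    Icc_subset_Icc_left hy.1 (hstep' y hy)
  have hmem (n : ℕ) : f^[n] a ∈ Icc a b := hmaps.iterate n ⟨le_rfl, hab⟩
  have hmono : Monotone fun n => f^[n] a := monotone_nat_of_le_succ fun n => by
    rw [iterate_succ_apply']
    exact (hstep' _ (hmem n)).1
  obtain ⟨L, hL⟩ : ∃ L, Tendsto (fun n => f^[n] a) atTop (𝓝 L) :=
    ⟨_, tendsto_atTop_ciSup hmono ⟨b, forall_mem_range.2 fun n => (hmem n).2⟩⟩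
  have hLmem : L ∈ Icc a b := isClosed_Icc.mem_of_tendsto hL (Eventually.of_forall hmem)
  have hfL : Tendsto (fun n => f^[n + 1] a) atTop (𝓝 (f L)) := by
    simp only [iterate_succ_apply']
    exact (hf L hLmem).tendsto.comp (tendsto_nhdsWithin_iff.2 ⟨hL, Eventually.of_forall hmem⟩)
  have hfix : f L = L := tendsto_nhds_unique hfL (hL.comp (tendsto_add_atTop_nat 1))
  have hLb : L = b := hLmem.2.eq_of_not_lt fun hlt => (hstep L ⟨hLmem.1, hlt⟩).1.ne' hfix
  exact hLb ▸ hL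

end MonotoneIteration

section Step

variable {K : Type*} [Field K]

/-- The scalar Newton–Schulz map `y ↦ y (3 - y²) / 2`, the action of one Newton–Schulz step
`M ↦ ½ M (3I - MᵀM)` on a singular value of `M`. -/
def newtonSchulzStep (y : K) : K := y * (3 - y ^ 2) / 2

theorem continuous_newtonSchulzStep [TopologicalSpace K] [IsTopologicalRing K] :
    Continuous (newtonSchulzStep : K → K) := by
  unfold newtonSchulzStep
  fun_prop

variable [CharZero K]

theorem isFixedPt_newtonSchulzStep_one : IsFixedPt newtonSchulzStep (1 : K) := by
  norm_num [IsFixedPt, newtonSchulzStep]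

theorem one_sub_newtonSchulzStep (y : K) :
    1 - newtonSchulzStep y = (1 - y) ^ 2 * (y + 2) / 2 := by
  unfold newtonSchulzStep
  ring

theorem newtonSchulzStep_sub_self (y : K) :
    newtonSchulzStep y - y = y * (1 - y) * (1 + y) / 2 := by
  unfold newtonSchulzStep
  ring

end Step

section Order

variable {K : Type*} [Field K] [LinearOrder K] [IsStrictOrderedRing K] {y : K}

theorem newtonSchulzStep_pos (hy : 0 < y) (hy3 : y ^ 2 < 3) : 0 < newtonSchulzStep y :=
  half_pos (mul_pos hy (sub_pos.2 hy3))

theorem newtonSchulzStep_le_one (hy : -2 ≤ y) : newtonSchulzStep y ≤ 1 := by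
  have hy2 : 0 ≤ y + 2 := neg_le_iff_add_nonneg.1 hy
  rw [← sub_nonneg, one_sub_newtonSchulzStep]
  positivity

theorem lt_newtonSchulzStep (hy0 : 0 < y) (hy1 : y < 1) : y < newtonSchulzStep y := by
  rw [← sub_pos, newtonSchulzStep_sub_self]
  exact half_pos (mul_pos (mul_pos hy0 (sub_pos.2 hy1)) (by positivity))

end Order

theorem tendsto_iterate_newtonSchulzStep_of_le_one {y : ℝ} (hy0 : 0 < y) (hy1 : y ≤ 1) :
    Tendsto (fun n => newtonSchulzStep^[n] y) atTop (𝓝 1) := by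
  refine tendsto_iterate_of_forall_mem_Ioc hy1 continuous_newtonSchulzStep.continuousOn
    isFixedPt_newtonSchulzStep_one fun z hz => ?_
  have hz0 : 0 < z := hy0.trans_le hz.1
  exact ⟨lt_newtonSchulzStep hz0 hz.2, newtonSchulzStep_le_one (by linarith)⟩

theorem tendsto_iterate_newtonSchulzStep {y : ℝ} (hy : 0 < y) (hy3 : y ^ 2 < 3) :
    Tendsto (fun n => newtonSchulzStep^[n] y) atTop (𝓝 1) := by
  rw [← tendsto_add_atTop_iff_nat 1]
  simp only [iterate_succ_apply]
  exact tendsto_iterate_newtonSchulzStep_of_le_one (newtonSchulzStep_pos hy hy3)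
    (newtonSchulzStep_le_one (by linarith))

/-- **Scalar Newton–Schulz convergence.** For `x₀ ∈ (0, √3)`, the iteration
`x_{k+1} = x_k (3 - x_k²)/2` converges to `1`. -/
theorem newton_schulz_scalar_tendsto_one
    (x₀ : ℝ) (hx₀ : 0 < x₀) (hx₀' : x₀ < Real.sqrt 3)
    (x : ℕ → ℝ) (hx0 : x 0 = x₀)
    (hx : ∀ k, x (k + 1) = x k * (3 - (x k) ^ 2) / 2) :
    Filter.Tendsto x Filter.atTop (nhds 1) := by
  have hiter : x = fun k => newtonSchulzStep^[k] x₀ := by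
    funext k
    induction k with
    | zero => exact hx0
    | succ k ih => rw [iterate_succ_apply', ← ih, hx, newtonSchulzStep]
  rw [hiter]
  exact tendsto_iterate_newtonSchulzStep hx₀ ((Real.lt_sqrt hx₀.le).1 hx₀')
end
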